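/- For every polynomial p of degree at most m on ℝ^d and every multi-index derivative order n ≤ m, the n-th derivative at zero is controlled by finite differences at zero: |∇^n p(0)| ≤ Σ_{k=n}^m C^k |D^k p(0)| for a universal constant C, where D^k p(0) denotes the collection of iterated forward unit finite differences of order k evaluated at 0 and |∇^n p(0)| the Euclidean norm of the tensor of n-th partial derivatives at 0. -/

import Mathlib

open MvPolynomial

/-- Iterated partial derivative `∂^α` on polynomials in `d` variables. -/
noncomputable def pdMulti {d : ℕ} (α : Fin d → ℕ) :
    MvPolynomial (Fin d) ℝ →ₗ[ℝ] MvPolynomial (Fin d) ℝ :=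
  (List.ofFn (fun i : Fin d =>
    ((((MvPolynomial.pderiv i).toLinearMap : Module.End ℝ (MvPolynomial (Fin d) ℝ))) ^ (α i)))).prod

/-- Forward finite difference in the `i`-th coordinate direction. -/
def fdiff {d : ℕ} (i : Fin d) (f : (Fin d → ℝ) → ℝ) : (Fin d → ℝ) → ℝ :=
  fun x => f (x + Pi.single i 1) - f x

/-- Iterated forward finite difference `D^α = D_1^{α_1} ⋯ D_d^{α_d}`. -/
def fdiffMulti {d : ℕ} (α : Fin d → ℕ) (f : (Fin d → ℝ) → ℝ) : (Fin d → ℝ) → ℝ :=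
  ((List.ofFn (fun i : Fin d => (fdiff i)^[α i])).foldr (· ∘ ·) id) f

/-- `|∇ⁿ p(0)| = (Σ_{|α|=n} (n!／α!) (∂^α p(0))²)^{1/2}`. -/
noncomputable def derivNorm {d : ℕ} (n : ℕ) (p : MvPolynomial (Fin d) ℝ) : ℝ :=
  Real.sqrt (∑ᶠ α : Fin d → ℕ,
    if (∑ i, α i) = n then
      ((Nat.factorial n : ℝ) / ((∏ i, Nat.factorial (α i) : ℕ) : ℝ)) *
        (MvPolynomial.eval 0 (pdMulti α p)) ^ 2
    else 0)

/-- `|D^k p(0)| = (Σ_{|α|=k} (D^α p(0))²)^{1/2}`. -/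
noncomputable def fdiffNorm {d : ℕ} (k : ℕ) (p : MvPolynomial (Fin d) ℝ) : ℝ :=
  Real.sqrt (∑ᶠ α : Fin d → ℕ,
    if (∑ i, α i) = k then
      (fdiffMulti α (fun z => MvPolynomial.eval z p) 0) ^ 2
    else 0)

/-!
By Taylor's formula `1 + D_i = exp ∂_i`, so that `∂^α = ∏ i, (log (1 + D_i)) ^ α_i` is a power
series in the commuting differences `D_i`, starting in order `|α|` and, on polynomials of degree at
most `m`, stopping at order `m`. The coefficient of `D_i ^ b` in `(log (1 + D_i)) ^ a` is the `a`-th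
derivative at `0` of the binomial polynomial `x ↦ x.choose b`, as one sees from Newton's forward
difference formula, and it is bounded by `2 ^ b`. It is enough to check this expansion on monomials,
where both `∂^α` and `D^β` factor into operators in one variable. Since there are at most `d ^ k`
multi-indices of order `k`, and the weights `n! / α!` of order `n` add up to `d ^ n`, passing to the
norms only costs factors that are exponential in the order.
-/

section NewtonExpansion

variable (K : Type*) [Field K]

/-- The `a`-th derivative at `0` of the binomial polynomial `X (X - 1) ⋯ (X - b + 1) / b!`, written
as `a!` times its `a`-th coefficient; this is the coefficient of `X ^ b` in `(log (1 + X)) ^ a`. -/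
noncomputable def newtonCoeff (a b : ℕ) : K :=
  a.factorial * (descPochhammer K b).coeff a / b.factorial

theorem newtonCoeff_eq_zero_of_lt {a b : ℕ} (h : b < a) : newtonCoeff K a b = 0 := by
  rw [newtonCoeff, Polynomial.coeff_eq_zero_of_natDegree_lt (by rwa [descPochhammer_natDegree]),
    mul_zero, zero_div]

theorem newtonCoeff_zero_right (a : ℕ) : newtonCoeff K a 0 = if a = 0 then 1 else 0 := by
  rcases eq_or_ne a 0 with rfl | ha
  · simp [newtonCoeff]
  · simp [newtonCoeff_eq_zero_of_lt K (Nat.pos_of_ne_zero ha), ha]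

/-- For `a = 0` the truncated subtraction is harmless, since its term carries the factor `a`. -/
theorem succ_mul_newtonCoeff_succ [CharZero K] (a b : ℕ) :
    (b + 1) * newtonCoeff K a (b + 1) = a * newtonCoeff K (a - 1) b - b * newtonCoeff K a b := by
  have hb : (b.factorial : K) ≠ 0 := by exact_mod_cast b.factorial_ne_zero
  have hb' : (b + 1 : K) ≠ 0 := by exact_mod_cast b.succ_ne_zero
  unfold newtonCoeff
  rw [descPochhammer_succ_right, mul_sub, Polynomial.coeff_sub, ← Polynomial.C_eq_natCast,
    Polynomial.coeff_mul_C, Nat.factorial_succ]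
  cases a with
  | zero =>
    rw [Polynomial.coeff_mul_X_zero]
    push_cast
    field_simp
    ring
  | succ a =>
    rw [Polynomial.coeff_mul_X, Nat.factorial_succ, Nat.add_sub_cancel]
    push_cast
    field_simp

theorem abs_newtonCoeff_le [LinearOrder K] [IsStrictOrderedRing K] (a b : ℕ) :
    |newtonCoeff K a b| ≤ 2 ^ b := by
  induction b generalizing a with
  | zero =>
    rw [newtonCoeff_zero_right]
    split_ifs <;> simp
  | succ b ih =>
    rcases lt_or_ge (b + 1) a with h | h
    · simp [newtonCoeff_eq_zero_of_lt K h]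
    have hb : (0 : K) < b + 1 := by positivity
    refine le_of_mul_le_mul_left ?_ hb
    calc (b + 1) * |newtonCoeff K a (b + 1)|
        = |a * newtonCoeff K (a - 1) b - b * newtonCoeff K a b| := by
          rw [← succ_mul_newtonCoeff_succ, abs_mul, abs_of_pos hb]
      _ ≤ a * |newtonCoeff K (a - 1) b| + b * |newtonCoeff K a b| := by
          simpa only [abs_mul, Nat.abs_cast] using
            abs_sub (a * newtonCoeff K (a - 1) b) (b * newtonCoeff K a b)
      _ ≤ (b + 1) * 2 ^ b + (b + 1) * 2 ^ b := by
          gcongr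
          · exact_mod_cast h
          · exact ih _
          · exact le_add_of_nonneg_right zero_le_one
          · exact ih _
      _ = (b + 1) * 2 ^ (b + 1) := by ring

variable {K} [CharZero K]

theorem eq_sum_fwdDiff_mul_descPochhammer {q : Polynomial K} {N : ℕ} (hq : q.natDegree ≤ N) :
    q = ∑ b ∈ Finset.range (N + 1),
      Polynomial.C ((fwdDiff 1)^[b] q.eval 0 / b.factorial) * descPochhammer K b := by
  have infinite_range : (Set.range fun n : ℕ => ((N + n : ℕ) : K)).Infinite :=
    Set.infinite_range_of_injective (Nat.cast_injective.comp (add_right_injective N))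
  refine Polynomial.eq_of_infinite_eval_eq _ _ (infinite_range.mono ?_)
  rintro _ ⟨n, rfl⟩
  have newton := shift_eq_sum_fwdDiff_iter 1 q.eval (N + n) 0
  have truncate : ∑ b ∈ Finset.range (N + 1), (N + n).choose b • (fwdDiff 1)^[b] q.eval 0 =
      ∑ b ∈ Finset.range (N + n + 1), (N + n).choose b • (fwdDiff 1)^[b] q.eval 0 := by
    refine Finset.sum_subset (Finset.range_mono (by lia)) fun b _ hb => ?_
    have hb : q.natDegree < b := by
      rw [Finset.mem_range] at hb
      lia
    rw [Polynomial.fwdDiff_iter_eq_zero_of_degree_lt hb, Pi.zero_apply, smul_zero]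
  rw [nsmul_one, zero_add, ← truncate] at newton
  rw [Set.mem_ofPred_eq, newton, Polynomial.eval_finsetSum]
  refine Finset.sum_congr rfl fun b _ => ?_
  rw [Polynomial.eval_mul, Polynomial.eval_C, nsmul_eq_mul,
    Nat.cast_choose_eq_descPochhammer_div]
  ring

theorem eval_zero_iterate_derivative_eq_sum {q : Polynomial K} {N : ℕ} (hq : q.natDegree ≤ N)
    (a : ℕ) :
    (Polynomial.derivative^[a] q).eval 0 =
      ∑ b ∈ Finset.range (N + 1), newtonCoeff K a b * (fwdDiff 1)^[b] q.eval 0 := by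
  rw [← Polynomial.coeff_zero_eq_eval_zero, Polynomial.coeff_iterate_derivative, zero_add,
    Nat.descFactorial_self]
  conv_lhs => rw [eq_sum_fwdDiff_mul_descPochhammer hq]
  rw [Polynomial.finsetSum_coeff, Finset.smul_sum]
  refine Finset.sum_congr rfl fun b _ => ?_
  rw [Polynomial.coeff_C_mul, nsmul_eq_mul, newtonCoeff]
  ring

end NewtonExpansion

section Factorization

variable {d : ℕ}

theorem prod_map_pow_smul_of_smul_eq_update {ι G B : Type*} {A : ι → Type*} [DecidableEq ι]
    [Monoid G] [MulAction G B] {T : ι → G} {S : ∀ i, A i → A i} {Φ : (∀ i, A i) → B}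
    (h : ∀ i f, T i • Φ f = Φ (Function.update f i (S i (f i)))) (α : ι → ℕ)
    {l : List ι} (hl : l.Nodup) (f : ∀ i, A i) :
    (l.map fun i => T i ^ α i).prod • Φ f =
      Φ fun i => if i ∈ l then (S i)^[α i] (f i) else f i := by
  have pow_smul (i : ι) (k : ℕ) (f : ∀ i, A i) :
      T i ^ k • Φ f = Φ (Function.update f i ((S i)^[k] (f i))) := by
    induction k with
    | zero => simp
    | succ k ih => simp [pow_succ', mul_smul, ih, h, Function.iterate_succ_apply']
  induction l with
  | nil => simp
  | cons i l ih =>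
    obtain ⟨hi, hl⟩ := List.nodup_cons.mp hl
    rw [List.map_cons, List.prod_cons, mul_smul, ih hl, pow_smul]
    congr 1
    ext j
    rcases eq_or_ne j i with rfl | hj
    · simp [hi]
    · simp [hj]

theorem prod_ofFn_pow_smul_of_smul_eq_update {G B : Type*} {A : Fin d → Type*}
    [Monoid G] [MulAction G B] {T : Fin d → G} {S : ∀ i, A i → A i} {Φ : (∀ i, A i) → B}
    (h : ∀ i f, T i • Φ f = Φ (Function.update f i (S i (f i)))) (α : Fin d → ℕ)
    (f : ∀ i, A i) :
    (List.ofFn fun i => T i ^ α i).prod • Φ f = Φ fun i => (S i)^[α i] (f i) := by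
  simpa only [List.mem_finRange, if_true, List.ofFn_eq_map] using
    prod_map_pow_smul_of_smul_eq_update h α (List.nodup_finRange d) f

theorem pderiv_prod_aeval_X {σ R : Type*} [Fintype σ] [DecidableEq σ] [CommSemiring R] (i : σ)
    (f : σ → Polynomial R) :
    pderiv i (∏ j, Polynomial.aeval (X j : MvPolynomial σ R) (f j)) =
      ∏ j, Polynomial.aeval (X j : MvPolynomial σ R)
        (Function.update f i (Polynomial.derivative (f i)) j) := by
  have pderiv_other : pderiv i (∏ j ∈ Finset.univ \ {i},
      Polynomial.aeval (X j : MvPolynomial σ R) (f j)) = 0 := by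
    refine Finset.prod_induction _ (pderiv i · = 0) (fun p q hp hq => ?_) pderiv_one
      fun j hj => ?_
    · simp [Derivation.leibniz, hp, hq]
    · have hj : j ≠ i := by simpa using hj
      simp [Derivation.map_aeval, pderiv_X_of_ne hj]
  have factor (g : Polynomial R) :
      ∏ j, Polynomial.aeval (X j : MvPolynomial σ R) (Function.update f i g j) =
        Polynomial.aeval (X i) g *
          ∏ j ∈ Finset.univ \ {i}, Polynomial.aeval (X j : MvPolynomial σ R) (f j) := by
    have apply_update (j : σ) := Function.apply_update
      (fun j q => Polynomial.aeval (X j : MvPolynomial σ R) q) f i g j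
    rw [Finset.prod_congr rfl fun j _ => apply_update j,
      Finset.prod_update_of_mem (Finset.mem_univ i)]
  rw [factor]
  conv_lhs => rw [← Function.update_eq_self i f, factor]
  simp [Derivation.leibniz, pderiv_other, Derivation.map_aeval, mul_comm]

theorem fdiff_prod (i : Fin d) (f : Fin d → ℝ → ℝ) :
    fdiff i (fun z => ∏ j, f j (z j)) =
      fun z => ∏ j, Function.update f i (fwdDiff 1 (f i)) j (z j) := by
  ext z
  have shifted : (fun j => f j ((z + Pi.single i 1 : Fin d → ℝ) j)) =
      Function.update (fun j => f j (z j)) i (f i (z i + 1)) := by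
    ext j
    rcases eq_or_ne j i with rfl | hj <;> simp [*]
  have unshifted := Function.update_eq_self i fun j => f j (z j)
  have differenced : (fun j => Function.update f i (fwdDiff 1 (f i)) j (z j)) =
      Function.update (fun j => f j (z j)) i (f i (z i + 1) - f i (z i)) :=
    funext fun j => Function.apply_update (fun j g => g (z j)) f i _ j
  rw [fdiff, shifted, differenced, ← unshifted]
  simp only [Finset.prod_update_of_mem (Finset.mem_univ i), Function.update_idem, sub_mul]

end Factorization

section Functionals

variable {d : ℕ}

/-- `fdiff i` as a linear map. -/
def fdiffₗ (i : Fin d) : Module.End ℝ ((Fin d → ℝ) → ℝ) where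
  toFun := fdiff i
  map_add' f g := by
    ext x
    simp only [fdiff, Pi.add_apply]
    ring
  map_smul' c f := by
    ext x
    simp only [fdiff, Pi.smul_apply, RingHom.id_apply, smul_sub]

/-- `fdiffMulti β` as a linear map. -/
def fdiffMultiₗ (β : Fin d → ℕ) : Module.End ℝ ((Fin d → ℝ) → ℝ) :=
  (List.ofFn fun i => fdiffₗ i ^ β i).prod

/-- The functional `p ↦ D^β p(0)`. -/
noncomputable def fdiffAtZero (β : Fin d → ℕ) : MvPolynomial (Fin d) ℝ →ₗ[ℝ] ℝ :=
  LinearMap.proj 0 ∘ₗ fdiffMultiₗ β ∘ₗ evalₗ ℝ (Fin d)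

/-- The functional `p ↦ ∂^α p(0)`. -/
noncomputable def derivAtZero (α : Fin d → ℕ) : MvPolynomial (Fin d) ℝ →ₗ[ℝ] ℝ :=
  LinearMap.proj 0 ∘ₗ evalₗ ℝ (Fin d) ∘ₗ pdMulti α

theorem coe_list_prod_eq_foldr {R M : Type*} [Semiring R] [AddCommMonoid M] [Module R M]
    (l : List (Module.End R M)) : ⇑l.prod = (l.map (⇑)).foldr (· ∘ ·) id := by
  induction l with
  | nil => rfl
  | cons T l ih => rw [List.prod_cons, Module.End.coe_mul, ih, List.map_cons, List.foldr_cons]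

theorem coe_fdiffMultiₗ (β : Fin d → ℕ) : ⇑(fdiffMultiₗ β) = fdiffMulti β := by
  ext1 f
  rw [fdiffMultiₗ, coe_list_prod_eq_foldr, List.map_ofFn]
  simp only [Function.comp_def, Module.End.coe_pow]
  rfl

theorem fdiffAtZero_apply (β : Fin d → ℕ) (p : MvPolynomial (Fin d) ℝ) :
    fdiffAtZero β p = fdiffMulti β (fun z => eval z p) 0 := by
  rw [← coe_fdiffMultiₗ]
  rfl

theorem derivAtZero_apply (α : Fin d → ℕ) (p : MvPolynomial (Fin d) ℝ) :
    derivAtZero α p = eval 0 (pdMulti α p) :=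
  rfl

theorem fdiffMulti_prod (β : Fin d → ℕ) (f : Fin d → ℝ → ℝ) :
    fdiffMulti β (fun z => ∏ j, f j (z j)) = fun z => ∏ j, (fwdDiff 1)^[β j] (f j) (z j) := by
  rw [← coe_fdiffMultiₗ]
  exact prod_ofFn_pow_smul_of_smul_eq_update (T := fdiffₗ) (S := fun _ => fwdDiff 1)
    (Φ := fun (f : Fin d → ℝ → ℝ) (z : Fin d → ℝ) => ∏ j, f j (z j)) fdiff_prod β f

theorem pdMulti_prod_aeval_X (α : Fin d → ℕ) (f : Fin d → Polynomial ℝ) :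
    pdMulti α (∏ j, Polynomial.aeval (X j) (f j)) =
      ∏ j, Polynomial.aeval (X j) (Polynomial.derivative^[α j] (f j)) :=
  prod_ofFn_pow_smul_of_smul_eq_update
    (T := fun i => ((pderiv i).toLinearMap : Module.End ℝ (MvPolynomial (Fin d) ℝ)))
    (S := fun _ => ⇑Polynomial.derivative)
    (Φ := fun f => ∏ j, Polynomial.aeval (X j : MvPolynomial (Fin d) ℝ) (f j))
    pderiv_prod_aeval_X α f

theorem eval_prod_aeval_X {σ R : Type*} [Fintype σ] [CommSemiring R] (z : σ → R)
    (f : σ → Polynomial R) :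
    eval z (∏ j, Polynomial.aeval (X j) (f j)) = ∏ j, (f j).eval (z j) := by
  simp only [map_prod, ← coe_aeval_eq_eval, RingHom.coe_coe, ← Polynomial.aeval_algHom_apply,
    aeval_X, Polynomial.coe_aeval_eq_eval]

theorem fdiffAtZero_prod_aeval_X (β : Fin d → ℕ) (f : Fin d → Polynomial ℝ) :
    fdiffAtZero β (∏ j, Polynomial.aeval (X j) (f j)) =
      ∏ j, (fwdDiff 1)^[β j] (f j).eval 0 := by
  simp only [fdiffAtZero_apply, eval_prod_aeval_X]
  exact congrFun (fdiffMulti_prod β fun j => (f j).eval) 0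

theorem derivAtZero_prod_aeval_X (α : Fin d → ℕ) (f : Fin d → Polynomial ℝ) :
    derivAtZero α (∏ j, Polynomial.aeval (X j) (f j)) =
      ∏ j, (Polynomial.derivative^[α j] (f j)).eval 0 := by
  rw [derivAtZero_apply, pdMulti_prod_aeval_X, eval_prod_aeval_X, Pi.zero_def]

theorem monomial_one_eq_prod_aeval_X {σ R : Type*} [Fintype σ] [CommSemiring R] (γ : σ →₀ ℕ) :
    (monomial γ 1 : MvPolynomial σ R) =
      ∏ j, Polynomial.aeval (X j) (Polynomial.X ^ γ j : Polynomial R) := by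
  simp [monomial_eq, Finsupp.prod_fintype]

theorem linearMap_apply_eq_of_forall_monomial {σ R M : Type*} [CommSemiring R]
    [AddCommMonoid M] [Module R M] {L L' : MvPolynomial σ R →ₗ[R] M} {p : MvPolynomial σ R}
    (h : ∀ γ ∈ p.support, L (monomial γ 1) = L' (monomial γ 1)) : L p = L' p := by
  rw [p.as_sum, map_sum, map_sum]
  refine Finset.sum_congr rfl fun γ hγ => ?_
  rw [← mul_one (coeff γ p), ← smul_eq_mul, ← smul_monomial, map_smul, map_smul, h γ hγ]

theorem fdiffAtZero_eq_zero_of_totalDegree_lt {p : MvPolynomial (Fin d) ℝ} {β : Fin d → ℕ}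
    (hβ : p.totalDegree < ∑ i, β i) : fdiffAtZero β p = 0 := by
  refine linearMap_apply_eq_of_forall_monomial (L' := 0) fun γ hγ => ?_
  have degree_le : ∑ i, γ i ≤ p.totalDegree := by
    simpa [Finsupp.sum_fintype] using le_totalDegree hγ
  obtain ⟨j, -, hj⟩ := Finset.exists_lt_of_sum_lt (degree_le.trans_lt hβ)
  rw [monomial_one_eq_prod_aeval_X, fdiffAtZero_prod_aeval_X, LinearMap.zero_apply]
  refine Finset.prod_eq_zero (Finset.mem_univ j) ?_
  rw [Polynomial.fwdDiff_iter_eq_zero_of_degree_lt (by rwa [Polynomial.natDegree_X_pow]),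
    Pi.zero_apply]

theorem derivAtZero_eq_sum_piFinset {p : MvPolynomial (Fin d) ℝ} {N : ℕ}
    (hp : ∀ i, p.degreeOf i ≤ N) (α : Fin d → ℕ) :
    derivAtZero α p = ∑ β ∈ Fintype.piFinset fun _ => Finset.range (N + 1),
      (∏ i, newtonCoeff ℝ (α i) (β i)) * fdiffAtZero β p := by
  suffices derivAtZero α p = (∑ β ∈ Fintype.piFinset fun _ => Finset.range (N + 1),
      (∏ i, newtonCoeff ℝ (α i) (β i)) • fdiffAtZero β) p by
    simpa [LinearMap.sum_apply] using this
  refine linearMap_apply_eq_of_forall_monomial fun γ hγ => ?_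
  have natDegree_le (j : Fin d) : (Polynomial.X ^ γ j : Polynomial ℝ).natDegree ≤ N := by
    simpa only [Polynomial.natDegree_X_pow] using (monomial_le_degreeOf j hγ).trans (hp j)
  rw [monomial_one_eq_prod_aeval_X, derivAtZero_prod_aeval_X,
    Finset.prod_congr rfl fun j _ => eval_zero_iterate_derivative_eq_sum (natDegree_le j) (α j),
    Finset.prod_univ_sum]
  simp only [LinearMap.sum_apply, LinearMap.smul_apply, fdiffAtZero_prod_aeval_X, smul_eq_mul,
    Finset.prod_mul_distrib]

end Functionals

section MultiIndices

theorem sum_piFinset_range_eq_sum_piAntidiag {ι M : Type*} [Fintype ι] [DecidableEq ι]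
    [AddCommMonoid M] {n m : ℕ} {f : (ι → ℕ) → M}
    (hf : ∀ β, ∑ i, β i ∉ Finset.Icc n m → f β = 0) :
    ∑ β ∈ Fintype.piFinset fun _ => Finset.range (m + 1), f β =
      ∑ k ∈ Finset.Icc n m, ∑ β ∈ Finset.univ.piAntidiag k, f β := by
  have slice {k : ℕ} (hk : k ∈ Finset.Icc n m) :
      {β ∈ Fintype.piFinset fun _ : ι => Finset.range (m + 1) | ∑ i, β i = k} =
        Finset.univ.piAntidiag k := by
    ext β
    simp only [Finset.mem_filter, Fintype.mem_piFinset, Finset.mem_range, Finset.mem_piAntidiag,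
      Finset.mem_univ, implies_true, and_true, and_iff_right_iff_imp]
    rintro rfl i
    have := Finset.single_le_sum (fun j _ => Nat.zero_le (β j)) (Finset.mem_univ i)
    have := (Finset.mem_Icc.mp hk).2
    lia
  calc ∑ β ∈ Fintype.piFinset fun _ => Finset.range (m + 1), f β
      = ∑ β ∈ Fintype.piFinset fun _ => Finset.range (m + 1) with ∑ i, β i ∈ Finset.Icc n m,
          f β := (Finset.sum_filter_of_ne fun β _ => not_imp_comm.mp (hf β)).symm
    _ = ∑ k ∈ Finset.Icc n m,
          ∑ β ∈ Fintype.piFinset fun _ => Finset.range (m + 1) with ∑ i, β i = k, f β :=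
        (Finset.sum_fiberwise_eq_sum_filter _ _ _ _).symm
    _ = ∑ k ∈ Finset.Icc n m, ∑ β ∈ Finset.univ.piAntidiag k, f β :=
        Finset.sum_congr rfl fun k hk => by rw [slice hk]

theorem finsum_ite_sum_eq_sum_piAntidiag {ι M : Type*} [Fintype ι] [DecidableEq ι]
    [AddCommMonoid M] (n : ℕ) (f : (ι → ℕ) → M) :
    (∑ᶠ α : ι → ℕ, if ∑ i, α i = n then f α else 0) =
      ∑ α ∈ Finset.univ.piAntidiag n, f α := by
  rw [← finsum_mem_finset_eq_sum]
  simp [finsum_eq_if]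

theorem sum_multinomial_piAntidiag {ι : Type*} [DecidableEq ι] (s : Finset ι) (n : ℕ) :
    ∑ α ∈ s.piAntidiag n, Nat.multinomial s α = s.card ^ n := by
  simpa using (Finset.sum_pow_eq_sum_piAntidiag (R := ℕ) s (fun _ => 1) n).symm

theorem card_piAntidiag_le {ι : Type*} [DecidableEq ι] (s : Finset ι) (n : ℕ) :
    (s.piAntidiag n).card ≤ s.card ^ n := by
  rw [← sum_multinomial_piAntidiag, Finset.card_eq_sum_ones]
  exact Finset.sum_le_sum fun α _ => Nat.multinomial_pos s α

end MultiIndices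

section Norms

variable {d : ℕ}

theorem derivNorm_eq_sqrt_sum (n : ℕ) (p : MvPolynomial (Fin d) ℝ) :
    derivNorm n p = √(∑ α ∈ Finset.univ.piAntidiag n,
      Nat.multinomial Finset.univ α * derivAtZero α p ^ 2) := by
  rw [derivNorm, finsum_ite_sum_eq_sum_piAntidiag]
  congr! 2 with α hα
  have hα : ∑ i, α i = n := by simpa using hα
  rw [Nat.multinomial, Nat.cast_div (Nat.prod_factorial_dvd_factorial_sum _ _) (by positivity), hα,
    derivAtZero_apply]

theorem fdiffNorm_nonneg (k : ℕ) (p : MvPolynomial (Fin d) ℝ) : 0 ≤ fdiffNorm k p :=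
  Real.sqrt_nonneg _

theorem fdiffNorm_eq_sqrt_sum (k : ℕ) (p : MvPolynomial (Fin d) ℝ) :
    fdiffNorm k p = √(∑ β ∈ Finset.univ.piAntidiag k, fdiffAtZero β p ^ 2) := by
  simp only [fdiffNorm, finsum_ite_sum_eq_sum_piAntidiag, fdiffAtZero_apply]

theorem derivNorm_le_sqrt_mul {n : ℕ} {p : MvPolynomial (Fin d) ℝ} {M : ℝ} (hM : 0 ≤ M)
    (h : ∀ α : Fin d → ℕ, ∑ i, α i = n → |derivAtZero α p| ≤ M) :
    derivNorm n p ≤ √(d ^ n) * M := by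
  have sum_multinomial : ∑ α ∈ Finset.univ.piAntidiag n,
      (Nat.multinomial (Finset.univ : Finset (Fin d)) α : ℝ) = d ^ n := by
    exact_mod_cast (sum_multinomial_piAntidiag _ n).trans (by rw [Finset.card_fin])
  rw [derivNorm_eq_sqrt_sum, ← sum_multinomial, ← Real.sqrt_sq hM,
    ← Real.sqrt_mul' _ (sq_nonneg M), Finset.sum_mul]
  refine Real.sqrt_le_sqrt (Finset.sum_le_sum fun α hα => ?_)
  have hα : ∑ i, α i = n := by simpa using hα
  exact mul_le_mul_of_nonneg_left (sq_le_sq.mpr ((h α hα).trans (le_abs_self M)))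
    (Nat.cast_nonneg _)

theorem abs_fdiffAtZero_le_fdiffNorm (β : Fin d → ℕ) (p : MvPolynomial (Fin d) ℝ) :
    |fdiffAtZero β p| ≤ fdiffNorm (∑ i, β i) p := by
  rw [fdiffNorm_eq_sqrt_sum]
  refine Real.abs_le_sqrt (Finset.single_le_sum (f := fun β => fdiffAtZero β p ^ 2)
    (fun _ _ => sq_nonneg _) ?_)
  simp

theorem sum_abs_fdiffAtZero_le (k : ℕ) (p : MvPolynomial (Fin d) ℝ) :
    ∑ β ∈ Finset.univ.piAntidiag k, |fdiffAtZero β p| ≤ d ^ k * fdiffNorm k p := by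
  have norm_nonneg := fdiffNorm_nonneg k p
  have card_le : ((Finset.univ : Finset (Fin d)).piAntidiag k).card ≤ (d : ℝ) ^ k := by
    exact_mod_cast (card_piAntidiag_le _ k).trans_eq (by rw [Finset.card_fin])
  have term_le : ∀ β ∈ (Finset.univ : Finset (Fin d)).piAntidiag k,
      |fdiffAtZero β p| ≤ fdiffNorm k p := fun β hβ => by
    obtain rfl : ∑ i, β i = k := by simpa using hβ
    exact abs_fdiffAtZero_le_fdiffNorm β p
  refine (Finset.sum_le_card_nsmul _ _ _ term_le).trans ?_
  rw [nsmul_eq_mul]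
  gcongr

theorem derivAtZero_eq_sum_piAntidiag {m : ℕ} {p : MvPolynomial (Fin d) ℝ}
    (hp : p.totalDegree ≤ m) (α : Fin d → ℕ) :
    derivAtZero α p = ∑ k ∈ Finset.Icc (∑ i, α i) m, ∑ β ∈ Finset.univ.piAntidiag k,
      (∏ i, newtonCoeff ℝ (α i) (β i)) * fdiffAtZero β p := by
  rw [derivAtZero_eq_sum_piFinset fun i => (degreeOf_le_totalDegree p i).trans hp]
  refine sum_piFinset_range_eq_sum_piAntidiag fun β hβ => ?_
  rw [Finset.mem_Icc, not_and_or, not_le, not_le] at hβ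
  rcases hβ with hβ | hβ
  · obtain ⟨i, -, hi⟩ := Finset.exists_lt_of_sum_lt hβ
    rw [Finset.prod_eq_zero (Finset.mem_univ i) (newtonCoeff_eq_zero_of_lt ℝ hi), zero_mul]
  · rw [fdiffAtZero_eq_zero_of_totalDegree_lt (hp.trans_lt hβ), mul_zero]

theorem abs_derivAtZero_le {m : ℕ} {p : MvPolynomial (Fin d) ℝ} (hp : p.totalDegree ≤ m)
    (α : Fin d → ℕ) :
    |derivAtZero α p| ≤ ∑ k ∈ Finset.Icc (∑ i, α i) m, (2 * d) ^ k * fdiffNorm k p := by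
  rw [derivAtZero_eq_sum_piAntidiag hp]
  refine (Finset.abs_sum_le_sum_abs _ _).trans (Finset.sum_le_sum fun k _ => ?_)
  calc |∑ β ∈ Finset.univ.piAntidiag k, (∏ i, newtonCoeff ℝ (α i) (β i)) * fdiffAtZero β p|
      ≤ ∑ β ∈ Finset.univ.piAntidiag k, 2 ^ k * |fdiffAtZero β p| := by
        refine (Finset.abs_sum_le_sum_abs _ _).trans (Finset.sum_le_sum fun β hβ => ?_)
        obtain rfl : ∑ i, β i = k := by simpa using hβ
        rw [abs_mul, Finset.abs_prod, ← Finset.prod_pow_eq_pow_sum]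
        gcongr
        exact abs_newtonCoeff_le ℝ _ _
    _ ≤ 2 ^ k * (d ^ k * fdiffNorm k p) := by
        rw [← Finset.mul_sum]
        gcongr
        exact sum_abs_fdiffAtZero_le k p
    _ = (2 * d) ^ k * fdiffNorm k p := by ring

theorem sqrt_pow_mul_pow_le {x : ℝ} (hx : 0 ≤ x) {n k : ℕ} (h : n ≤ k) :
    √(x ^ n) * (2 * x) ^ k ≤ (2 * (x + 1) ^ 2) ^ k := by
  have le_succ : x ≤ x + 1 := le_add_of_nonneg_right zero_le_one
  have one_le : 1 ≤ x + 1 := le_add_of_nonneg_left hx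
  have sqrt_le : √(x ^ n) ≤ (x + 1) ^ k := by
    refine Real.sqrt_le_iff.mpr ⟨by positivity, ?_⟩
    calc x ^ n ≤ (x + 1) ^ n := by gcongr
      _ ≤ (x + 1) ^ k := pow_le_pow_right₀ one_le h
      _ ≤ ((x + 1) ^ k) ^ 2 := le_self_pow₀ (one_le_pow₀ one_le) two_ne_zero
  calc √(x ^ n) * (2 * x) ^ k ≤ (x + 1) ^ k * (2 * (x + 1)) ^ k := by gcongr
    _ = (2 * (x + 1) ^ 2) ^ k := by rw [← mul_pow, mul_left_comm, ← sq]

end Norms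

/-- Derivatives at zero are controlled by finite differences at zero: there is a universal
constant `C` such that for every polynomial `p` of degree at most `m` and every `n ≤ m`,
`|∇ⁿ p(0)| ≤ Σ_{k=n}^m C^k |D^k p(0)|`. -/
theorem deriv_le_finite_differences (d : ℕ) :
    ∃ C : ℝ, 0 < C ∧
      ∀ (m : ℕ) (p : MvPolynomial (Fin d) ℝ), p.totalDegree ≤ m →
        ∀ n, n ≤ m →
          derivNorm n p ≤ ∑ k ∈ Finset.Icc n m, C ^ k * fdiffNorm k p := by
  refine ⟨2 * (d + 1) ^ 2, by positivity, fun m p hp n _ => ?_⟩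
  calc derivNorm n p
      ≤ √(d ^ n) * ∑ k ∈ Finset.Icc n m, (2 * d) ^ k * fdiffNorm k p := by
        refine derivNorm_le_sqrt_mul (Finset.sum_nonneg fun k _ => ?_) fun α hα => ?_
        · exact mul_nonneg (by positivity) (fdiffNorm_nonneg k p)
        · exact hα ▸ abs_derivAtZero_le hp α
    _ ≤ ∑ k ∈ Finset.Icc n m, (2 * (d + 1) ^ 2) ^ k * fdiffNorm k p := by
        rw [Finset.mul_sum]
        refine Finset.sum_le_sum fun k hk => ?_
        have hnk : n ≤ k := (Finset.mem_Icc.mp hk).1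
        rw [← mul_assoc]
        exact mul_le_mul_of_nonneg_right (sqrt_pow_mul_pow_le d.cast_nonneg hnk)
          (fdiffNorm_nonneg k p)
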